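/- Propensity-independent generalization error bound (Theorem 1): suppose L > 0 and ℓ is L-Lipschitz in each argument, i.e., |ℓ(a, b) − ℓ(a', b)| ≤ L|a − a'| and |ℓ(a, b) − ℓ(a, b')| ≤ L|b − b'| for all reals. Let H be a nonempty, uniformly bounded class of real m×n matrices whose elements include the true rating matrix R ∈ H. Let P_unif be the uniform distribution on D (the MCAR mechanism) and let P_MNAR be any probability distribution on D (the MNAR mechanism). Let S_MCAR and S_MNAR be independent i.i.d. samples of size M ≥ 1 from P_unif and P_MNAR respectively, with empirical distributions P̂_MCAR and P̂_MNAR. Then for every δ ∈ (0, 1), with probability at least 1 − δ, for every R̂ ∈ H: L^ℓ_ideal(R̂) ≤ (1/M) Σ_{k=1}^M ℓ(R̂_{u_k,i_k}, R_{u_k,i_k}) (sum over the sample S_MNAR) + ψ_{R̂,H}(P̂_MCAR, P̂_MNAR) + 2L ( 3 R_{P_MNAR,M}(H) + 2 R_{P_unif,M}(H) ) + 3Δ √( log(6/δ) / (2M) ). -/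

import Mathlib

open scoped Classical

/-- Rademacher complexity of a class `F` of functions `D → ℝ` for i.i.d. samples of
size `M` from the distribution `P` on `D = Fin m × Fin n`:
`R_{P,M}(F) = E_S E_σ [ sup_{f∈F} (1/M) Σ_k σ_k · f (S k) ]`, where the expectation
over samples is the explicit finite sum weighted by the product probabilities and the
Rademacher signs `σ : Fin M → Bool` (`true ↦ +1`, `false ↦ -1`) are uniform. -/
noncomputable def rademacher {m n : ℕ} (M : ℕ) (P : Fin m × Fin n → ℝ)
    (F : Set (Fin m × Fin n → ℝ)) : ℝ :=
  ∑ S : Fin M → Fin m × Fin n, (∏ k : Fin M, P (S k)) *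
    ∑ σ : Fin M → Bool, ((1 : ℝ) / 2) ^ M *
      sSup ((fun f => (1 / (M : ℝ)) *
        ∑ k : Fin M, (if σ k then (1 : ℝ) else -1) * f (S k)) '' F)

/-- Rademacher complexity of a class `H` of real `m × n` matrices, i.e. of the
associated function class `{ (u,i) ↦ R̂ u i : R̂ ∈ H }`. -/
noncomputable def matRademacher {m n : ℕ} (M : ℕ) (P : Fin m × Fin n → ℝ)
    (H : Set (Fin m → Fin n → ℝ)) : ℝ :=
  rademacher M P ((fun Rh : Fin m → Fin n → ℝ => fun p : Fin m × Fin n => Rh p.1 p.2) '' H)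

/-- Probability of an event `E` over an i.i.d. sample `S : Fin M → D` drawn from the
distribution `P` on `D` (the `M`-fold product distribution, as an explicit finite sum). -/
noncomputable def prSample {m n : ℕ} (M : ℕ) (P : Fin m × Fin n → ℝ)
    (E : (Fin M → Fin m × Fin n) → Prop) : ℝ :=
  ∑ S : Fin M → Fin m × Fin n, if E S then ∏ k : Fin M, P (S k) else 0

/-- Probability of an event `E` over two independent i.i.d. samples of size `M`,
drawn from the distributions `P` and `P'` on `D` respectively. -/
noncomputable def prSample2 {m n : ℕ} (M : ℕ) (P P' : Fin m × Fin n → ℝ)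
    (E : (Fin M → Fin m × Fin n) → (Fin M → Fin m × Fin n) → Prop) : ℝ :=
  ∑ S : Fin M → Fin m × Fin n, ∑ S' : Fin M → Fin m × Fin n,
    if E S S' then (∏ k : Fin M, P (S k)) * (∏ k : Fin M, P' (S' k)) else 0

/-- Empirical distribution of a sample `S : Fin M → D`:
`P̂_S (p) = (1/M) · #{k : S k = p}`. -/
noncomputable def empDist {m n M : ℕ} (S : Fin M → Fin m × Fin n) :
    Fin m × Fin n → ℝ :=
  fun p => (1 / (M : ℝ)) * ((Finset.univ.filter (fun k : Fin M => S k = p)).card : ℝ)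

/-- Weighted loss `L^ℓ(A, B | P) = Σ_{(u,i)∈D} P (u,i) · ℓ(A u i, B u i)`. -/
noncomputable def wLoss {m n : ℕ} (ℓ : ℝ → ℝ → ℝ) (P : Fin m × Fin n → ℝ)
    (A B : Fin m → Fin n → ℝ) : ℝ :=
  ∑ p : Fin m × Fin n, P p * ℓ (A p.1 p.2) (B p.1 p.2)

/-- Propensity matrix divergence (PMD):
`ψ_{R̂,H}(P, P') = sup_{R̂'∈H} { L^ℓ(R̂, R̂' | P) − L^ℓ(R̂, R̂' | P') }`. -/
noncomputable def PMD {m n : ℕ} (ℓ : ℝ → ℝ → ℝ) (H : Set (Fin m → Fin n → ℝ))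
    (Rhat : Fin m → Fin n → ℝ) (P P' : Fin m × Fin n → ℝ) : ℝ :=
  sSup ((fun R' => wLoss ℓ P Rhat R' - wLoss ℓ P' Rhat R') '' H)

/-!
The PMD is a supremum over candidate rating matrices `R' ∈ H`, so evaluating it at `R' = R` bounds
the empirical MCAR loss of every `R̂ ∈ H` by its MNAR loss plus the PMD, for each realisation of the
two samples. What remains is a uniform deviation bound for the MCAR sample alone: by McDiarmid's
inequality `sup_R̂ (ideal loss - empirical loss)` exceeds its mean by at most `Δ √(log(1/δ)/(2M))`
with probability `1 - δ`; symmetrization bounds the mean by twice the Rademacher complexity of the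
loss class; and the Ledoux–Talagrand contraction principle, for `ℓ` Lipschitz in its first argument,
bounds that complexity by `L` times the one of `H`.
-/

open MeasureTheory ProbabilityTheory
open scoped NNReal BigOperators

section BoundedDifferences

theorem hasSubgaussianMGF_of_forall_le_add {Ω : Type*} [MeasurableSpace Ω] {μ : Measure Ω}
    [IsProbabilityMeasure μ] {f : Ω → ℝ} (hf : AEMeasurable f μ) {c : ℝ≥0}
    (hc : ∀ x y, f x ≤ f y + c) :
    HasSubgaussianMGF (fun x => f x - ∫ y, f y ∂μ) ((c / 2) ^ 2) μ := by
  have : Nonempty Ω := nonempty_of_isProbabilityMeasure μ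
  have hbdd : BddBelow (Set.range f) :=
    ⟨f (Classical.arbitrary Ω) - c, Set.forall_mem_range.2 fun x => by
      linarith [hc (Classical.arbitrary Ω) x]⟩
  have hmem : ∀ x, f x ∈ Set.Icc (⨅ y, f y) ((⨅ y, f y) + c) := fun x =>
    ⟨ciInf_le hbdd x, by
      rw [← sub_le_iff_le_add]
      exact le_ciInf fun y => by linarith [hc x y]⟩
  simpa using hasSubgaussianMGF_of_mem_Icc hf (ae_of_all μ hmem)

variable {Ω₁ Ω₂ : Type*} [MeasurableSpace Ω₁] [MeasurableSpace Ω₂]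
  {μ : Measure Ω₁} {ν : Measure Ω₂} [IsProbabilityMeasure μ] [IsProbabilityMeasure ν]

theorem hasSubgaussianMGF_prod {X : Ω₁ → ℝ} {Y : Ω₁ × Ω₂ → ℝ} {cX cY : ℝ≥0}
    (hX : HasSubgaussianMGF X cX μ) (hYm : AEMeasurable Y (μ.prod ν))
    (hY : ∀ x, HasSubgaussianMGF (fun y => Y (x, y)) cY ν) :
    HasSubgaussianMGF (fun p => X p.1 + Y p) (cX + cY) (μ.prod ν) := by
  have hinner : ∀ t x, ∫ y, Real.exp (t * (X x + Y (x, y))) ∂ν ≤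
      Real.exp (t * X x) * Real.exp (cY * t ^ 2 / 2) := by
    intro t x
    simp only [mul_add, Real.exp_add, integral_const_mul]
    exact mul_le_mul_of_nonneg_left ((hY x).mgf_le t) (Real.exp_pos _).le
  have hint : ∀ t, Integrable (fun p : Ω₁ × Ω₂ => Real.exp (t * (X p.1 + Y p))) (μ.prod ν) := by
    intro t
    have hmeas : AEStronglyMeasurable (fun p : Ω₁ × Ω₂ => Real.exp (t * (X p.1 + Y p)))
        (μ.prod ν) :=
      (Real.measurable_exp.comp_aemeasurable
        ((hX.aemeasurable.comp_fst.add hYm).const_mul t)).aestronglyMeasurable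
    refine (integrable_prod_iff hmeas).2 ⟨ae_of_all _ fun x => ?_, ?_⟩
    · simp only [mul_add, Real.exp_add]
      exact ((hY x).integrable_exp_mul t).const_mul _
    · refine ((hX.integrable_exp_mul t).mul_const (Real.exp (cY * t ^ 2 / 2))).mono'
        hmeas.norm.integral_prod_right' (ae_of_all _ fun x => ?_)
      simp only [Real.norm_eq_abs, Real.abs_exp]
      rw [abs_of_nonneg (integral_nonneg fun y => (Real.exp_pos _).le)]
      exact hinner t x
  refine ⟨hint, fun t => ?_⟩
  calc mgf (fun p : Ω₁ × Ω₂ => X p.1 + Y p) (μ.prod ν) t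
      = ∫ x, ∫ y, Real.exp (t * (X x + Y (x, y))) ∂ν ∂μ := integral_prod _ (hint t)
    _ ≤ ∫ x, Real.exp (t * X x) * Real.exp (cY * t ^ 2 / 2) ∂μ :=
        integral_mono (hint t).integral_prod_left
          ((hX.integrable_exp_mul t).mul_const _) (hinner t)
    _ ≤ Real.exp (cX * t ^ 2 / 2) * Real.exp (cY * t ^ 2 / 2) := by
        rw [integral_mul_const]
        exact mul_le_mul_of_nonneg_right (hX.mgf_le t) (Real.exp_pos _).le
    _ = Real.exp ((cX + cY : ℝ≥0) * t ^ 2 / 2) := by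
        rw [← Real.exp_add, NNReal.coe_add]; ring_nf

theorem hasSubgaussianMGF_sub_integral_prod {g : Ω₁ × Ω₂ → ℝ} (hg : Integrable g (μ.prod ν))
    {c c' : ℝ≥0} (hc : ∀ x x' y, g (x, y) ≤ g (x', y) + c)
    (hc' : ∀ x, HasSubgaussianMGF (fun y => g (x, y) - ∫ y', g (x, y') ∂ν) c' ν) :
    HasSubgaussianMGF (fun p => g p - ∫ q, g q ∂μ.prod ν) ((c / 2) ^ 2 + c') (μ.prod ν) := by
  set G : Ω₁ → ℝ := fun x => ∫ y, g (x, y) ∂ν with hG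
  have hGint : Integrable G μ := hg.integral_prod_left
  have hsection : ∀ x, Integrable (fun y => g (x, y)) ν := fun x =>
    ((hc' x).integrable.add (integrable_const (G x))).congr (ae_of_all _ fun y => by simp [hG])
  have hGdiff : ∀ x x', G x ≤ G x' + c := fun x x' => by
    calc G x ≤ ∫ y, (g (x', y) + c) ∂ν :=
          integral_mono (hsection x) ((hsection x').add (integrable_const _)) (hc x x')
      _ = G x' + c := by rw [integral_add (hsection x') (integrable_const _)]; simp [hG]
  have hsum := hasSubgaussianMGF_prod (hasSubgaussianMGF_of_forall_le_add hGint.aemeasurable hGdiff)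
    (hg.sub (hGint.comp_fst ν)).aemeasurable hc'
  refine hsum.congr (ae_of_all _ fun p => ?_)
  simp [integral_prod g hg, hG]

variable {ι : Type*} {α : ι → Type*}

/-- McDiarmid's bounded differences condition: altering coordinate `i` alone changes `g` by at most
`c i`. Since the two points are interchangeable, a one-sided inequality suffices. -/
def HasBoundedDifferences (g : (∀ i, α i) → ℝ) (c : ι → ℝ≥0) : Prop :=
  ∀ i S S', (∀ j ≠ i, S j = S' j) → g S ≤ g S' + c i

theorem HasBoundedDifferences.le_add_sum [Fintype ι] {g : (∀ i, α i) → ℝ} {c : ι → ℝ≥0}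
    (hg : HasBoundedDifferences g c) (S S' : ∀ i, α i) : g S ≤ g S' + ∑ i, c i := by
  suffices ∀ (s : Finset ι) (S : ∀ i, α i), (∀ j ∉ s, S j = S' j) → g S ≤ g S' + ∑ i ∈ s, c i from
    this Finset.univ S (by simp)
  intro s
  induction s using Finset.induction_on with
  | empty =>
    intro S hS
    simp [show S = S' from funext fun j => hS j (Finset.notMem_empty j)]
  | insert i s hi ih =>
    intro S hS
    have hreset := hg i S (Function.update S i (S' i)) fun j hj =>
      (Function.update_of_ne hj _ _).symm
    have hrest := ih (Function.update S i (S' i)) fun j hj => by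
      by_cases hji : j = i
      · subst hji; simp
      · simpa [Function.update_of_ne hji] using hS j (by simp [hji, hj])
    rw [Finset.sum_insert hi]
    push_cast at hrest ⊢
    linarith

theorem HasBoundedDifferences.integrable [Finite ι] [∀ i, MeasurableSpace (α i)]
    {μ : Measure (∀ i, α i)} [IsProbabilityMeasure μ]
    {g : (∀ i, α i) → ℝ} (hgm : Measurable g) {c : ι → ℝ≥0}
    (hg : HasBoundedDifferences g c) : Integrable g μ := by
  cases nonempty_fintype ι
  obtain ⟨S'⟩ := nonempty_of_isProbabilityMeasure μ
  refine Integrable.of_mem_Icc (g S' - ∑ i, c i) (g S' + ∑ i, c i) hgm.aemeasurable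
    (ae_of_all _ fun S => ⟨?_, hg.le_add_sum S S'⟩)
  linarith [hg.le_add_sum S' S]

theorem HasBoundedDifferences.hasSubgaussianMGF {n : ℕ} {α : Fin n → Type*}
    [∀ i, MeasurableSpace (α i)] (μ : ∀ i, Measure (α i)) [∀ i, IsProbabilityMeasure (μ i)]
    {g : (∀ i, α i) → ℝ} (hgm : Measurable g) {c : Fin n → ℝ≥0} (hg : HasBoundedDifferences g c) :
    HasSubgaussianMGF (fun S => g S - ∫ T, g T ∂Measure.pi μ) (∑ i, (c i / 2) ^ 2)
      (Measure.pi μ) := by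
  induction n with
  | zero =>
    have hconst : ∀ S, g S - ∫ T, g T ∂Measure.pi μ = 0 := fun S => by
      simp [Subsingleton.elim _ S]
    simp [hconst]
  | succ n ih =>
    set e := MeasurableEquiv.piFinSuccAbove α 0
    have he : MeasurePreserving e (Measure.pi μ) _ := measurePreserving_piFinSuccAbove μ 0
    have hgint : Integrable (fun q => g (e.symm q))
        ((μ 0).prod (Measure.pi fun j => μ (Fin.succAbove 0 j))) :=
      he.symm.integrable_comp_of_integrable (hg.integrable hgm)
    have htail : ∀ x, HasBoundedDifferences (fun T => g (e.symm (x, T))) fun j => c j.succ := by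
      intro x j T T' hT
      refine hg j.succ _ _ fun k hk => ?_
      induction k using Fin.cases with
      | zero => rfl
      | succ k => exact hT k (fun h => hk (by rw [h]))
    have hprod := hasSubgaussianMGF_sub_integral_prod (c := c 0) hgint
      (fun x x' T => hg 0 _ _ fun j hj => by
        obtain ⟨k, rfl⟩ := Fin.exists_succ_eq.2 hj
        rfl)
      (fun x => ih (fun j => μ j.succ)
        (hgm.comp (e.symm.measurable.comp measurable_prodMk_left)) (htail x))
    rw [he.symm.integral_comp' g, ← he.map_eq] at hprod
    rw [Fin.sum_univ_succ]
    exact (hprod.of_map e.measurable.aemeasurable).congr (ae_of_all _ fun S => by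
      simp only [Function.comp_apply, e.symm_apply_apply])

end BoundedDifferences

section RademacherAverage

variable {ι κ : Type*}

theorem bddAbove_range_of_forall_abs_le {f : ι → ℝ} {C : ℝ} (hf : ∀ i, |f i| ≤ C) :
    BddAbove (Set.range f) :=
  ⟨C, Set.forall_mem_range.2 fun i => (abs_le.1 (hf i)).2⟩

theorem abs_ciSup_le_of_forall_abs_le [Nonempty ι] {f : ι → ℝ} {C : ℝ} (hf : ∀ i, |f i| ≤ C) :
    |⨆ i, f i| ≤ C := by
  obtain ⟨i⟩ := ‹Nonempty ι›
  exact abs_le.2 ⟨(abs_le.1 (hf i)).1.trans (le_ciSup (bddAbove_range_of_forall_abs_le hf) i),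
    ciSup_le fun i => (abs_le.1 (hf i)).2⟩

theorem ciSup_add_add_ciSup_sub_le [Nonempty ι] {a u v : ι → ℝ}
    (huv : ∀ i j, |u i - u j| ≤ |v i - v j|)
    (hadd : BddAbove (Set.range fun i => a i + v i))
    (hsub : BddAbove (Set.range fun i => a i - v i)) :
    (⨆ i, (a i + u i)) + ⨆ i, (a i - u i) ≤ (⨆ i, (a i + v i)) + ⨆ i, (a i - v i) := by
  have hpair : ∀ i j, (a i + u i) + (a j - u j) ≤ (⨆ i, (a i + v i)) + ⨆ i, (a i - v i) := by
    intro i j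
    have huv_ij := (le_abs_self _).trans (huv i j)
    rcases abs_cases (v i - v j) with ⟨habs, -⟩ | ⟨habs, -⟩
    · linarith [le_ciSup hadd i, le_ciSup hsub j]
    · linarith [le_ciSup hadd j, le_ciSup hsub i]
  rw [← le_sub_iff_add_le]
  refine ciSup_le fun i => ?_
  rw [le_sub_comm]
  exact ciSup_le fun j => by linarith [hpair i j]

/-- The Rademacher sign `±1` encoded by a Boolean. -/
noncomputable def boolSign (b : Bool) : ℝ := if b then 1 else -1

theorem abs_boolSign (b : Bool) : |boolSign b| = 1 := by cases b <;> simp [boolSign]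

theorem boolSign_not (b : Bool) : boolSign (!b) = -boolSign b := by cases b <;> simp [boolSign]

variable [Fintype κ]

theorem abs_sum_boolSign_mul_le (σ : κ → Bool) {x : κ → ℝ} {C : ℝ} (hx : ∀ k, |x k| ≤ C) :
    |∑ k, boolSign (σ k) * x k| ≤ Fintype.card κ * C :=
  calc |∑ k, boolSign (σ k) * x k|
      ≤ ∑ k, |boolSign (σ k) * x k| := Finset.abs_sum_le_sum_abs _ _
    _ ≤ ∑ _k : κ, C := Finset.sum_le_sum fun k _ => by simpa [abs_mul, abs_boolSign] using hx k
    _ = Fintype.card κ * C := by simp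

theorem bddAbove_range_sum_boolSign_mul (σ : κ → Bool) {v : ι → κ → ℝ} {C : ℝ}
    (hv : ∀ i k, |v i k| ≤ C) : BddAbove (Set.range fun i => ∑ k, boolSign (σ k) * v i k) :=
  bddAbove_range_of_forall_abs_le fun i => abs_sum_boolSign_mul_le σ (hv i)

variable [DecidableEq κ]

/-- The Rademacher average `E_σ [sup_i ∑ k, σ k * v i k]` of a family of vectors `v i`, for uniform
random signs `σ`. It is not normalised by the number of coordinates. -/
noncomputable def rademacherAvg (v : ι → κ → ℝ) : ℝ :=
  𝔼 σ : κ → Bool, ⨆ i, ∑ k, boolSign (σ k) * v i k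

theorem abs_rademacherAvg_le [Nonempty ι] {v : ι → κ → ℝ} {C : ℝ} (hv : ∀ i k, |v i k| ≤ C) :
    |rademacherAvg v| ≤ Fintype.card κ * C :=
  calc |rademacherAvg v| ≤ 𝔼 _σ : κ → Bool, (Fintype.card κ * C : ℝ) :=
        (Finset.abs_expect_le _ _).trans <| Finset.expect_le_expect fun σ _ =>
          abs_ciSup_le_of_forall_abs_le fun i => abs_sum_boolSign_mul_le σ (hv i)
    _ = Fintype.card κ * C := Fintype.expect_const _

theorem rademacherAvg_const_mul {L : ℝ} (hL : 0 ≤ L) (v : ι → κ → ℝ) :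
    rademacherAvg (fun i k => L * v i k) = L * rademacherAvg v := by
  simp only [rademacherAvg, Finset.mul_expect, Real.mul_iSup_of_nonneg hL, Finset.mul_sum,
    mul_left_comm]

theorem rademacherAvg_sub_le [Nonempty ι] {u v : ι → κ → ℝ} {C : ℝ}
    (hu : ∀ i k, |u i k| ≤ C) (hv : ∀ i k, |v i k| ≤ C) :
    rademacherAvg (fun i k => u i k - v i k) ≤ rademacherAvg u + rademacherAvg v := by
  have hflip : rademacherAvg v = 𝔼 σ : κ → Bool, ⨆ i, ∑ k, boolSign (!σ k) * v i k :=
    (Fintype.expect_equiv (Equiv.arrowCongr (.refl κ) Equiv.boolNot) _ _ fun σ => rfl).symm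
  rw [hflip, rademacherAvg, rademacherAvg, ← Finset.expect_add_distrib]
  refine Finset.expect_le_expect fun σ _ => ciSup_le fun i => ?_
  calc ∑ k, boolSign (σ k) * (u i k - v i k)
      = ∑ k, boolSign (σ k) * u i k + ∑ k, boolSign (!σ k) * v i k := by
        simp only [boolSign_not, ← Finset.sum_add_distrib]
        exact Finset.sum_congr rfl fun k _ => by ring
    _ ≤ _ := add_le_add (le_ciSup (bddAbove_range_sum_boolSign_mul σ hu) i)
        (le_ciSup (bddAbove_range_sum_boolSign_mul (fun k => !σ k) hv) i)

theorem expect_eq_expect_add_flip_div_two (k : κ) (F : (κ → Bool) → ℝ) :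
    𝔼 σ, F σ = 𝔼 σ, (F σ + F (Function.update σ k !σ k)) / 2 := by
  have hinv : Function.Involutive fun σ : κ → Bool => Function.update σ k !σ k := fun σ => by simp
  have hflip : 𝔼 σ, F (Function.update σ k !σ k) = 𝔼 σ, F σ :=
    Fintype.expect_equiv hinv.toPerm _ _ fun σ => rfl
  rw [← Finset.expect_div, Finset.expect_add_distrib, hflip]
  ring

theorem rademacherAvg_le_of_eq_of_ne [Nonempty ι] {u v : ι → κ → ℝ} {C : ℝ}
    (hv : ∀ i k, |v i k| ≤ C) (k : κ) (hne : ∀ i, ∀ l ≠ k, u i l = v i l)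
    (huv : ∀ i j, |u i k - u j k| ≤ |v i k - v j k|) :
    rademacherAvg u ≤ rademacherAvg v := by
  rw [rademacherAvg, rademacherAvg, expect_eq_expect_add_flip_div_two k,
    expect_eq_expect_add_flip_div_two k fun σ => ⨆ i, ∑ l, boolSign (σ l) * v i l]
  refine Finset.expect_le_expect fun σ _ => div_le_div_of_nonneg_right ?_ zero_le_two
  set a : ι → ℝ := fun i => ∑ l ∈ Finset.univ.erase k, boolSign (σ l) * v i l
  have hsplit : ∀ w : ι → κ → ℝ, (∀ i, ∀ l ≠ k, w i l = v i l) → ∀ i,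
      ∑ l, boolSign (σ l) * w i l = a i + boolSign (σ k) * w i k ∧
      ∑ l, boolSign (Function.update σ k (!σ k) l) * w i l = a i - boolSign (σ k) * w i k := by
    intro w hw i
    simp only [← Finset.sum_erase_add _ _ (Finset.mem_univ k), a]
    refine ⟨congrArg₂ _ (Finset.sum_congr rfl fun l hl => ?_) rfl,
      congrArg₂ _ (Finset.sum_congr rfl fun l hl => ?_) (by simp [boolSign_not])⟩
    · rw [hw i l (Finset.ne_of_mem_erase hl)]
    · rw [hw i l (Finset.ne_of_mem_erase hl), Function.update_of_ne (Finset.ne_of_mem_erase hl)]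
  have hbdd := bddAbove_range_sum_boolSign_mul σ hv
  have hbdd' := bddAbove_range_sum_boolSign_mul (Function.update σ k (!σ k)) hv
  simp only [hsplit u hne, hsplit v fun _ _ _ => rfl] at hbdd hbdd' ⊢
  refine ciSup_add_add_ciSup_sub_le (fun i j => ?_) hbdd hbdd'
  simpa only [← mul_sub, abs_mul, abs_boolSign, one_mul] using huv i j

theorem rademacherAvg_le_of_abs_sub_le [Nonempty ι] {u v : ι → κ → ℝ} {C : ℝ}
    (hv : ∀ i k, |v i k| ≤ C) (huv : ∀ k i j, |u i k - u j k| ≤ |v i k - v j k|) :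
    rademacherAvg u ≤ rademacherAvg v := by
  obtain ⟨i₀⟩ := ‹Nonempty ι›
  set B : κ → ℝ := fun k => |u i₀ k| + (C + C)
  have hu : ∀ i k, |u i k| ≤ B k := fun i k => by
    have hdiff := (huv k i i₀).trans ((abs_sub _ _).trans (add_le_add (hv i k) (hv i₀ k)))
    linarith [abs_sub_abs_le_abs_sub (u i k) (u i₀ k)]
  have hv' : ∀ i k, |v i k| ≤ B k := fun i k => by
    linarith [hv i k, abs_nonneg (u i₀ k), (abs_nonneg _).trans (hv i k)]
  have hB : ∀ k, B k ≤ ∑ l, B l := fun k =>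
    Finset.single_le_sum (fun l _ => (abs_nonneg _).trans (hu i₀ l)) (Finset.mem_univ k)
  -- Replace the coordinates of `v` by those of `u` one at a time.
  suffices ∀ s : Finset κ, rademacherAvg (fun i => s.piecewise (u i) (v i)) ≤ rademacherAvg v by
    simpa using this Finset.univ
  intro s
  induction s using Finset.induction_on with
  | empty => simp
  | insert k s hk ih =>
    refine (rademacherAvg_le_of_eq_of_ne (C := ∑ l, B l) (fun i l => ?_) k (fun i l hl => ?_)
      fun i j => ?_).trans ih
    · exact (Finset.piecewise_cases s (u i) (v i) (|·| ≤ B l) (hu i l) (hv' i l)).trans (hB l)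
    · exact s.piecewise_insert_of_ne _ _ hl
    · simpa [hk] using huv k i j

theorem rademacherAvg_comp_le_mul [Nonempty ι] {φ : κ → ℝ → ℝ} {L : ℝ} (hL : 0 ≤ L)
    (hφ : ∀ k x y, |φ k x - φ k y| ≤ L * |x - y|) {v : ι → κ → ℝ} {C : ℝ}
    (hv : ∀ i k, |v i k| ≤ C) :
    rademacherAvg (fun i k => φ k (v i k)) ≤ L * rademacherAvg v := by
  rw [← rademacherAvg_const_mul hL]
  refine rademacherAvg_le_of_abs_sub_le (C := L * C) (fun i k => ?_) fun k i j => ?_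
  · rw [abs_mul, abs_of_nonneg hL]
    exact mul_le_mul_of_nonneg_left (hv i k) hL
  · rw [← mul_sub, abs_mul, abs_of_nonneg hL]
    exact hφ k _ _

theorem rademacherAvg_nonneg [Nonempty ι] {v : ι → κ → ℝ} {C : ℝ} (hv : ∀ i k, |v i k| ≤ C) :
    0 ≤ rademacherAvg v :=
  calc 0 = rademacherAvg (fun (_ : ι) (_ : κ) => (0 : ℝ)) := by simp [rademacherAvg]
    _ ≤ rademacherAvg v := rademacherAvg_le_of_abs_sub_le hv fun k i j => by simp

end RademacherAverage

section Symmetrization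

theorem integrable_of_forall_abs_le {X : Type*} [MeasurableSpace X] [DiscreteMeasurableSpace X]
    {μ : Measure X} [IsFiniteMeasure μ] {f : X → ℝ} {C : ℝ} (hf : ∀ x, |f x| ≤ C) :
    Integrable f μ :=
  .of_bound (Measurable.of_discrete.aestronglyMeasurable) C (ae_of_all _ hf)

theorem abs_integral_le_of_forall_abs_le {X : Type*} [MeasurableSpace X] {μ : Measure X}
    [IsProbabilityMeasure μ] {f : X → ℝ} {C : ℝ} (hf : ∀ x, |f x| ≤ C) :
    |∫ x, f x ∂μ| ≤ C := by
  simpa using norm_integral_le_of_norm_le_const (f := f) (ae_of_all μ hf)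

theorem card_mul_integral_sub_sum_eq_integral_sum_sub {κ D : Type*} [Fintype κ]
    [MeasurableSpace D] {μ : Measure D} [IsProbabilityMeasure μ] {f : D → ℝ} (hf : Integrable f μ)
    (S : κ → D) :
    Fintype.card κ * ∫ x, f x ∂μ - ∑ k, f (S k) =
      ∫ T, ∑ k, (f (T k) - f (S k)) ∂Measure.pi (fun _ : κ => μ) := by
  have hint : ∀ k, Integrable (fun T : κ → D => f (T k)) (Measure.pi fun _ : κ => μ) :=
    fun k => (measurePreserving_eval _ k).integrable_comp_of_integrable hf
  have hmean : ∀ k, ∫ T : κ → D, f (T k) ∂Measure.pi (fun _ : κ => μ) = ∫ x, f x ∂μ :=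
    fun k => integral_comp_eval (μ := fun _ : κ => μ) hf.aestronglyMeasurable
  simp only [Finset.sum_sub_distrib]
  rw [integral_sub (integrable_finsetSum _ fun k _ => hint k) (integrable_const _),
    integral_finsetSum _ fun k _ => hint k]
  simp [hmean]

variable {ι κ D : Type*} [Nonempty ι] [Fintype κ] [Countable D] [MeasurableSpace D]
  [MeasurableSingletonClass D] {μ : Measure D} [IsProbabilityMeasure μ]

theorem integral_iSup_sub_sum_le_integral_iSup_sum_sub {f : ι → D → ℝ} {C : ℝ}
    (hf : ∀ i x, |f i x| ≤ C) :
    ∫ S, ⨆ i, (Fintype.card κ * ∫ x, f i x ∂μ - ∑ k, f i (S k)) ∂Measure.pi (fun _ : κ => μ) ≤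
      ∫ p, ⨆ i, ∑ k, (f i (p k).2 - f i (p k).1) ∂Measure.pi (fun _ : κ => μ.prod μ) := by
  have hbound : ∀ i (S T : κ → D), |∑ k, (f i (T k) - f i (S k))| ≤ Fintype.card κ * (C + C) := by
    intro i S T
    simpa [boolSign] using abs_sum_boolSign_mul_le (fun _ => true) fun k =>
      (abs_sub (f i (T k)) (f i (S k))).trans (add_le_add (hf i _) (hf i _))
  have hsup : ∀ S T : κ → D, |⨆ i, ∑ k, (f i (T k) - f i (S k))| ≤ Fintype.card κ * (C + C) :=
    fun S T => abs_ciSup_le_of_forall_abs_le fun i => hbound i S T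
  have hswap := measurePreserving_arrowProdEquivProdArrow D D κ (fun _ => μ) (fun _ => μ)
  calc _ ≤ ∫ S, ∫ T, ⨆ i, ∑ k, (f i (T k) - f i (S k)) ∂Measure.pi (fun _ : κ => μ)
          ∂Measure.pi (fun _ : κ => μ) := by
        simp only [fun i (S : κ → D) => card_mul_integral_sub_sum_eq_integral_sum_sub
          (integrable_of_forall_abs_le (hf i) : Integrable (f i) μ) S]
        exact integral_mono
          (integrable_of_forall_abs_le fun S => abs_ciSup_le_of_forall_abs_le fun i =>
            abs_integral_le_of_forall_abs_le (hbound i S))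
          (integrable_of_forall_abs_le fun S => abs_integral_le_of_forall_abs_le (hsup S))
          fun S => ciSup_le fun i => integral_mono (integrable_of_forall_abs_le (hbound i S))
            (integrable_of_forall_abs_le (hsup S)) fun T =>
              le_ciSup (bddAbove_range_of_forall_abs_le fun i => hbound i S T) i
    _ = ∫ q, ⨆ i, ∑ k, (f i (q.2 k) - f i (q.1 k))
          ∂(Measure.pi fun _ : κ => μ).prod (Measure.pi fun _ : κ => μ) :=
        (integral_prod _ (integrable_of_forall_abs_le fun q => hsup q.1 q.2)).symm
    _ = _ := (hswap.integral_comp' _).symm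

variable [DecidableEq κ]

theorem integral_iSup_sum_eq_integral_rademacherAvg {τ : D → D} (hτ : MeasurePreserving τ μ μ)
    {h : ι → D → ℝ} {C : ℝ} (hC : ∀ i x, |h i x| ≤ C) (hanti : ∀ i x, h i (τ x) = -h i x) :
    ∫ S, ⨆ i, ∑ k, h i (S k) ∂Measure.pi (fun _ : κ => μ) =
      ∫ S, rademacherAvg (fun i k => h i (S k)) ∂Measure.pi (fun _ : κ => μ) := by
  have hsigns : ∀ σ : κ → Bool,
      ∫ S, ⨆ i, ∑ k, h i (S k) ∂Measure.pi (fun _ : κ => μ) =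
        ∫ S, ⨆ i, ∑ k, boolSign (σ k) * h i (S k) ∂Measure.pi (fun _ : κ => μ) := by
    intro σ
    have hpres : MeasurePreserving (fun (S : κ → D) k => (if σ k then id else τ) (S k))
        (Measure.pi fun _ => μ) (Measure.pi fun _ => μ) :=
      measurePreserving_pi _ _ fun k => by split_ifs; exacts [.id μ, hτ]
    conv_lhs => rw [← hpres.map_eq]
    rw [integral_map hpres.aemeasurable Measurable.of_discrete.aestronglyMeasurable]
    congr! with S i k
    cases hk : σ k <;> simp [hk, boolSign, hanti]
  have hint : ∀ σ : κ → Bool, Integrable (fun S => ⨆ i, ∑ k, boolSign (σ k) * h i (S k))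
      (Measure.pi fun _ : κ => μ) := fun σ => integrable_of_forall_abs_le fun S =>
    abs_ciSup_le_of_forall_abs_le fun i => abs_sum_boolSign_mul_le σ fun k => hC i (S k)
  simp only [rademacherAvg, Fintype.expect_eq_sum_div_card, integral_div]
  rw [integral_finsetSum _ fun σ _ => hint σ, eq_div_iff (by simp),
    ← Finset.sum_congr rfl fun σ _ => hsigns σ]
  simp [mul_comm]

theorem integral_iSup_sub_sum_le_two_mul_integral_rademacherAvg {f : ι → D → ℝ} {C : ℝ}
    (hf : ∀ i x, |f i x| ≤ C) :
    ∫ S, ⨆ i, (Fintype.card κ * ∫ x, f i x ∂μ - ∑ k, f i (S k)) ∂Measure.pi (fun _ : κ => μ) ≤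
      2 * ∫ S, rademacherAvg (fun i k => f i (S k)) ∂Measure.pi (fun _ : κ => μ) := by
  have hdiff : ∀ i (q : D × D), |f i q.2 - f i q.1| ≤ C + C := fun i q =>
    (abs_sub _ _).trans (add_le_add (hf i _) (hf i _))
  have hint : ∀ π : D × D → D, Integrable (fun p => rademacherAvg fun i k => f i (π (p k)))
      (Measure.pi fun _ : κ => μ.prod μ) := fun π =>
    integrable_of_forall_abs_le fun p => abs_rademacherAvg_le fun i k => hf i (π (p k))
  have hmarginal : ∀ π : D × D → D, MeasurePreserving π (μ.prod μ) μ →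
      ∫ p, rademacherAvg (fun i k => f i (π (p k))) ∂Measure.pi (fun _ : κ => μ.prod μ) =
        ∫ S, rademacherAvg (fun i k => f i (S k)) ∂Measure.pi (fun _ : κ => μ) := by
    intro π hπ
    have hpi : MeasurePreserving (fun (p : κ → D × D) k => π (p k))
        (Measure.pi fun _ => μ.prod μ) (Measure.pi fun _ => μ) :=
      measurePreserving_pi _ _ fun _ => hπ
    rw [← hpi.map_eq, integral_map hpi.aemeasurable Measurable.of_discrete.aestronglyMeasurable]
  calc _ ≤ ∫ p, ⨆ i, ∑ k, (f i (p k).2 - f i (p k).1) ∂Measure.pi (fun _ : κ => μ.prod μ) :=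
        integral_iSup_sub_sum_le_integral_iSup_sum_sub hf
    _ = ∫ p, rademacherAvg (fun i k => f i (p k).2 - f i (p k).1)
          ∂Measure.pi (fun _ : κ => μ.prod μ) :=
        integral_iSup_sum_eq_integral_rademacherAvg Measure.measurePreserving_swap hdiff
          fun i q => by simp
    _ ≤ ∫ p, (rademacherAvg (fun i k => f i (p k).2) + rademacherAvg (fun i k => f i (p k).1))
          ∂Measure.pi (fun _ : κ => μ.prod μ) :=
        integral_mono (integrable_of_forall_abs_le fun p => abs_rademacherAvg_le fun i k =>
            hdiff i (p k))
          ((hint Prod.snd).add (hint Prod.fst))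
          fun p => rademacherAvg_sub_le (fun i k => hf i (p k).2) fun i k => hf i (p k).1
    _ = 2 * ∫ S, rademacherAvg (fun i k => f i (S k)) ∂Measure.pi (fun _ : κ => μ) := by
        rw [integral_add (hint Prod.snd) (hint Prod.fst), hmarginal _ measurePreserving_snd,
          hmarginal _ measurePreserving_fst, two_mul]

end Symmetrization

section UniformDeviation

theorem HasBoundedDifferences.one_sub_le_measureReal_le_integral_add {M : ℕ} {α : Fin M → Type*}
    [∀ k, MeasurableSpace (α k)] (μ : ∀ k, Measure (α k)) [∀ k, IsProbabilityMeasure (μ k)]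
    {g : (∀ k, α k) → ℝ} (hgm : Measurable g) {c : ℝ≥0}
    (hg : HasBoundedDifferences g fun _ => c) (hM : 1 ≤ M) (hc : 0 < c) {δ : ℝ} (hδ : 0 < δ)
    (hδ1 : δ ≤ 1) :
    1 - δ ≤ (Measure.pi μ).real
      {S | g S ≤ ∫ T, g T ∂Measure.pi μ + M * (c * √(Real.log (1 / δ) / (2 * M)))} := by
  set ε : ℝ := M * (c * √(Real.log (1 / δ) / (2 * M)))
  have hlog : 0 ≤ Real.log (1 / δ) := Real.log_nonneg ((one_le_div hδ).2 hδ1)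
  have hexp : -ε ^ 2 / (2 * (∑ _k : Fin M, (c / 2) ^ 2 : ℝ≥0)) = Real.log δ := by
    have : (c : ℝ) ≠ 0 := by exact_mod_cast hc.ne'
    have : M ≠ 0 := by omega
    simp only [ε, mul_pow, Real.sq_sqrt (div_nonneg hlog (by positivity : (0 : ℝ) ≤ 2 * M))]
    simp only [one_div, Real.log_inv]
    push_cast
    simp only [Finset.sum_const, Finset.card_univ, Fintype.card_fin, nsmul_eq_mul]
    field_simp
  have htail : (Measure.pi μ).real {S | ε ≤ g S - ∫ T, g T ∂Measure.pi μ} ≤ δ := by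
    simpa only [hexp, Real.exp_log hδ] using
      (hg.hasSubgaussianMGF μ hgm).measure_ge_le (by positivity : 0 ≤ ε)
  calc 1 - δ ≤ 1 - (Measure.pi μ).real {S | ε ≤ g S - ∫ T, g T ∂Measure.pi μ} := by linarith
    _ = (Measure.pi μ).real {S | ε ≤ g S - ∫ T, g T ∂Measure.pi μ}ᶜ :=
      (probReal_compl_eq_one_sub (measurableSet_le measurable_const (hgm.sub_const _))).symm
    _ ≤ _ := measureReal_mono fun S hS => by
      simp only [Set.mem_compl_iff, Set.mem_ofPred_eq, not_le] at hS ⊢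
      linarith

theorem bddAbove_range_sub_sum {ι κ D : Type*} [Fintype κ] {a : ι → ℝ}
    (ha : BddAbove (Set.range a)) {f : ι → D → ℝ} (hf : ∀ i x, 0 ≤ f i x) (S : κ → D) :
    BddAbove (Set.range fun i => a i - ∑ k, f i (S k)) :=
  ha.range_mono _ fun i => sub_le_self _ (Finset.sum_nonneg fun k _ => hf i (S k))

theorem hasBoundedDifferences_iSup_sub_sum {ι κ D : Type*} [Nonempty ι] [Fintype κ] {a : ι → ℝ}
    (ha : BddAbove (Set.range a)) {f : ι → D → ℝ} {c : ℝ≥0}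
    (hf : ∀ i x, f i x ∈ Set.Icc 0 (c : ℝ)) :
    HasBoundedDifferences (fun S : κ → D => ⨆ i, (a i - ∑ k, f i (S k))) fun _ => c := by
  intro k S S' hS
  refine ciSup_le fun i => ?_
  have hrest : ∑ l ∈ Finset.univ.erase k, f i (S l) = ∑ l ∈ Finset.univ.erase k, f i (S' l) :=
    Finset.sum_congr rfl fun l hl => by rw [hS l (Finset.ne_of_mem_erase hl)]
  have hsup := le_ciSup (bddAbove_range_sub_sum ha (fun i x => (hf i x).1) S') i
  simp only [← Finset.add_sum_erase _ _ (Finset.mem_univ k)] at hsup ⊢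
  linarith [(hf i (S k)).1, (hf i (S' k)).2]

theorem one_sub_le_measureReal_forall_integral_le {ι D : Type*} [Nonempty ι] [Countable D]
    [MeasurableSpace D] [MeasurableSingletonClass D] (μ : Measure D) [IsProbabilityMeasure μ]
    {M : ℕ} (hM : 1 ≤ M) {f : ι → D → ℝ} {c : ℝ≥0} (hc : 0 < c)
    (hf : ∀ i x, f i x ∈ Set.Icc 0 (c : ℝ)) {δ : ℝ} (hδ : 0 < δ) (hδ1 : δ ≤ 1) :
    1 - δ ≤ (Measure.pi fun _ : Fin M => μ).real {S | ∀ i, ∫ x, f i x ∂μ ≤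
      1 / M * ∑ k, f i (S k) +
        2 * (1 / M * ∫ T, rademacherAvg (fun i k => f i (T k)) ∂Measure.pi (fun _ : Fin M => μ)) +
        c * √(Real.log (1 / δ) / (2 * M))} := by
  have hM0 : (0 : ℝ) < M := by exact_mod_cast hM
  have habs : ∀ i x, |f i x| ≤ c := fun i x => by
    rw [abs_of_nonneg (hf i x).1]
    exact (hf i x).2
  have hmean : BddAbove (Set.range fun i => M * ∫ x, f i x ∂μ) :=
    bddAbove_range_of_forall_abs_le (C := M * c) fun i => by
      rw [abs_mul, Nat.abs_cast]
      exact mul_le_mul_of_nonneg_left (abs_integral_le_of_forall_abs_le (habs i)) hM0.le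
  refine ((hasBoundedDifferences_iSup_sub_sum hmean hf).one_sub_le_measureReal_le_integral_add
    (fun _ => μ) Measurable.of_discrete hM hc hδ hδ1).trans (measureReal_mono fun S hS i => ?_)
  have hsymm := integral_iSup_sub_sum_le_two_mul_integral_rademacherAvg (κ := Fin M) (μ := μ) habs
  have hdev := (le_ciSup (bddAbove_range_sub_sum hmean (fun i x => (hf i x).1) S) i).trans
    (Set.mem_ofPred.1 hS)
  rw [Fintype.card_fin] at hsymm
  set r := √(Real.log (1 / δ) / (2 * M))
  rw [← mul_le_mul_iff_right₀ hM0]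
  field_simp
  linarith

end UniformDeviation

section WeightMeasure

variable {α : Type*} [Fintype α] [MeasurableSpace α] {P : α → ℝ}

/-- The measure on a finite type with point masses `P a`, turning the weight functions of the
statement into measures. Negative weights are truncated to zero. -/
noncomputable def weightMeasure (P : α → ℝ) : Measure α :=
  ∑ a, ENNReal.ofReal (P a) • Measure.dirac a

instance : IsFiniteMeasure (weightMeasure P) :=
  ⟨by simp [weightMeasure, Measure.finsetSum_apply, ENNReal.sum_lt_top]⟩

variable [MeasurableSingletonClass α]

theorem weightMeasure_singleton (a : α) : weightMeasure P {a} = ENNReal.ofReal (P a) := by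
  simp [weightMeasure, Measure.finsetSum_apply, Set.indicator_apply, eq_comm]

theorem integral_weightMeasure (hP : ∀ a, 0 ≤ P a) (f : α → ℝ) :
    ∫ a, f a ∂weightMeasure P = ∑ a, P a * f a := by
  simp [integral_fintype .of_finite, measureReal_def, weightMeasure_singleton,
    ENNReal.toReal_ofReal, hP]

theorem measureReal_weightMeasure (hP : ∀ a, 0 ≤ P a) (E : α → Prop) :
    (weightMeasure P).real {a | E a} = ∑ a, if E a then P a else 0 := by
  rw [← integral_indicator_one (Set.toFinite _).measurableSet, integral_weightMeasure hP]
  simp [Set.indicator_apply]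

theorem isProbabilityMeasure_weightMeasure (hP : ∀ a, 0 ≤ P a) (hP1 : ∑ a, P a = 1) :
    IsProbabilityMeasure (weightMeasure P) := by
  have huniv := measureReal_weightMeasure hP fun _ => True
  refine isProbabilityMeasure_iff_real.2 ?_
  simpa [hP1] using huniv

theorem pi_weightMeasure {κ : Type*} [Fintype κ] [DecidableEq κ] (hP : ∀ a, 0 ≤ P a) :
    Measure.pi (fun _ : κ => weightMeasure P) = weightMeasure fun S => ∏ k, P (S k) :=
  Measure.ext_of_singleton fun S => by
    simp [weightMeasure_singleton, ENNReal.ofReal_prod_of_nonneg, hP]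

end WeightMeasure

section MatrixCompletion

variable {m n M : ℕ} {P P' : Fin m × Fin n → ℝ} {H : Set (Fin m → Fin n → ℝ)} {ℓ : ℝ → ℝ → ℝ}

theorem prSample_eq_measureReal (hP : ∀ p, 0 ≤ P p) (E : (Fin M → Fin m × Fin n) → Prop) :
    prSample M P E = (Measure.pi fun _ => weightMeasure P).real {S | E S} := by
  rw [pi_weightMeasure hP,
    measureReal_weightMeasure fun S => Finset.prod_nonneg fun k _ => hP (S k)]
  rfl

theorem prSample_mono (hP : ∀ p, 0 ≤ P p) {E F : (Fin M → Fin m × Fin n) → Prop}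
    (hEF : ∀ S, E S → F S) : prSample M P E ≤ prSample M P F := by
  rw [prSample_eq_measureReal hP, prSample_eq_measureReal hP]
  exact measureReal_mono hEF

theorem prSample_le_prSample2 (hP : ∀ p, 0 ≤ P p) (hP' : ∀ p, 0 ≤ P' p) (hP1 : ∑ p, P' p = 1)
    {E : (Fin M → Fin m × Fin n) → Prop}
    {F : (Fin M → Fin m × Fin n) → (Fin M → Fin m × Fin n) → Prop} (hEF : ∀ S S', E S → F S S') :
    prSample M P E ≤ prSample2 M P P' F := by
  have htotal : ∑ S' : Fin M → Fin m × Fin n, ∏ k, P' (S' k) = 1 := by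
    rw [← Fintype.sum_pow, hP1, one_pow]
  have hweight : ∀ S S' : Fin M → Fin m × Fin n, 0 ≤ (∏ k, P (S k)) * ∏ k, P' (S' k) :=
    fun S S' =>
      mul_nonneg (Finset.prod_nonneg fun k _ => hP _) (Finset.prod_nonneg fun k _ => hP' _)
  refine Finset.sum_le_sum fun S _ => ?_
  by_cases hS : E S
  · simp [hS, hEF S _ hS, ← Finset.mul_sum, htotal]
  · rw [if_neg hS]
    exact Finset.sum_nonneg fun S' _ => by split_ifs; exacts [hweight S S', le_rfl]

theorem matRademacher_eq_integral_rademacherAvg (hP : ∀ p, 0 ≤ P p) :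
    matRademacher M P H = 1 / M * ∫ S, rademacherAvg (fun (A : H) k => A.1 (S k).1 (S k).2)
      ∂Measure.pi (fun _ : Fin M => weightMeasure P) := by
  rw [pi_weightMeasure hP, integral_weightMeasure fun S => Finset.prod_nonneg fun k _ => hP (S k),
    matRademacher, rademacher, Finset.mul_sum]
  refine Finset.sum_congr rfl fun S _ => ?_
  simp only [rademacherAvg, Fintype.expect_eq_sum_div_card, Finset.sum_div, Finset.mul_sum]
  refine Finset.sum_congr rfl fun σ _ => ?_
  rw [Set.image_image, sSup_image']
  simp only [← Finset.mul_sum]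
  rw [← Real.mul_iSup_of_nonneg (by positivity)]
  simp only [boolSign, Fintype.card_fun, Fintype.card_bool, Fintype.card_fin, one_div, inv_pow,
    Nat.cast_pow, Nat.cast_ofNat]
  ring

theorem matRademacher_nonneg (hP : ∀ p, 0 ≤ P p) (hH : H.Nonempty) {C : ℝ}
    (hHb : ∀ A ∈ H, ∀ u i, |A u i| ≤ C) : 0 ≤ matRademacher M P H := by
  have : Nonempty H := hH.to_subtype
  rw [matRademacher_eq_integral_rademacherAvg hP]
  exact mul_nonneg (by positivity) <| integral_nonneg fun S =>
    rademacherAvg_nonneg fun A k => hHb A.1 A.2 _ _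

theorem wLoss_empDist (S : Fin M → Fin m × Fin n) (A B : Fin m → Fin n → ℝ) :
    wLoss ℓ (empDist S) A B =
      1 / M * ∑ k, ℓ (A (S k).1 (S k).2) (B (S k).1 (S k).2) := by
  simp only [wLoss, empDist, mul_assoc, ← Finset.mul_sum]
  rw [← Finset.sum_fiberwise Finset.univ S]
  refine congrArg _ (Finset.sum_congr rfl fun p _ => ?_)
  rw [Finset.sum_congr rfl fun k hk => by rw [(Finset.mem_filter.1 hk).2], Finset.sum_const,
    nsmul_eq_mul]

theorem wLoss_sub_wLoss_le_PMD {Δ : ℝ} (hℓ : ∀ a b, ℓ a b ∈ Set.Icc 0 Δ)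
    {R : Fin m → Fin n → ℝ} (hR : R ∈ H) (A : Fin m → Fin n → ℝ) :
    wLoss ℓ P A R - wLoss ℓ P' A R ≤ PMD ℓ H A P P' := by
  refine le_csSup ⟨∑ p, |P p - P' p| * Δ, Set.forall_mem_image.2 fun B _ => ?_⟩ ⟨R, hR, rfl⟩
  simp only [wLoss, ← Finset.sum_sub_distrib, ← sub_mul]
  exact Finset.sum_le_sum fun p _ =>
    mul_le_mul (le_abs_self _) (hℓ _ _).2 (hℓ _ _).1 (abs_nonneg _)

variable {Δ L δ : ℝ} {R : Fin m → Fin n → ℝ} {C : ℝ}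

theorem one_sub_le_prSample_forall_wLoss_le (hΔ : 0 < Δ) (hℓ : ∀ a b, ℓ a b ∈ Set.Icc 0 Δ)
    (hL : 0 ≤ L) (hLip : ∀ a a' b, |ℓ a b - ℓ a' b| ≤ L * |a - a'|) (hH : H.Nonempty)
    (hHb : ∀ A ∈ H, ∀ u i, |A u i| ≤ C) (hP : ∀ p, 0 ≤ P p) (hP1 : ∑ p, P p = 1) (hM : 1 ≤ M)
    (hδ : 0 < δ) (hδ1 : δ ≤ 1) :
    1 - δ ≤ prSample M P fun S => ∀ A ∈ H, wLoss ℓ P A R ≤ wLoss ℓ (empDist S) A R +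
      2 * L * matRademacher M P H + Δ * √(Real.log (1 / δ) / (2 * M)) := by
  have : Nonempty H := hH.to_subtype
  have := isProbabilityMeasure_weightMeasure hP hP1
  lift Δ to ℝ≥0 using hΔ.le
  have hcontraction : ∫ S, rademacherAvg
        (fun (A : H) k => ℓ (A.1 (S k).1 (S k).2) (R (S k).1 (S k).2))
        ∂Measure.pi (fun _ : Fin M => weightMeasure P) ≤
      L * ∫ S, rademacherAvg (fun (A : H) k => A.1 (S k).1 (S k).2)
        ∂Measure.pi (fun _ : Fin M => weightMeasure P) := by
    rw [← integral_const_mul]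
    refine integral_mono .of_finite .of_finite fun S => ?_
    exact rademacherAvg_comp_le_mul (φ := fun k x => ℓ x (R (S k).1 (S k).2))
      hL (fun k x y => hLip x y _) fun A k => hHb A.1 A.2 _ _
  rw [prSample_eq_measureReal hP, matRademacher_eq_integral_rademacherAvg hP]
  refine (one_sub_le_measureReal_forall_integral_le (weightMeasure P) hM
    (f := fun (A : H) p => ℓ (A.1 p.1 p.2) (R p.1 p.2)) (NNReal.coe_pos.1 hΔ)
    (fun A p => hℓ _ _) hδ hδ1).trans (measureReal_mono fun S hS A hA => ?_)
  have hdev := hS ⟨A, hA⟩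
  rw [integral_weightMeasure hP] at hdev
  have hM' := mul_le_mul_of_nonneg_left hcontraction (by positivity : (0 : ℝ) ≤ 1 / M)
  rw [wLoss_empDist]
  simp only [wLoss]
  linarith

theorem propensity_independent_generalization_bound_general (hΔ : 0 < Δ)
    (hℓ : ∀ a b, ℓ a b ∈ Set.Icc 0 Δ) (hL : 0 ≤ L)
    (hLip : ∀ a a' b, |ℓ a b - ℓ a' b| ≤ L * |a - a'|) (hHb : ∀ A ∈ H, ∀ u i, |A u i| ≤ C)
    (hR : R ∈ H) (hP : ∀ p, 0 ≤ P p) (hP1 : ∑ p, P p = 1) (hM : 1 ≤ M) (hδ : 0 < δ)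
    (hδ1 : δ ≤ 1) :
    1 - δ ≤ prSample M P fun S => ∀ Q, ∀ A ∈ H, wLoss ℓ P A R ≤
      wLoss ℓ Q A R + PMD ℓ H A (empDist S) Q + 2 * L * matRademacher M P H +
        Δ * √(Real.log (1 / δ) / (2 * M)) := by
  refine (one_sub_le_prSample_forall_wLoss_le (R := R) hΔ hℓ hL hLip ⟨R, hR⟩ hHb hP hP1 hM hδ
    hδ1).trans (prSample_mono hP fun S hS Q A hA => ?_)
  linarith [hS A hA, wLoss_sub_wLoss_le_PMD (P := empDist S) (P' := Q) hℓ hR A]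

end MatrixCompletion

/-- **Propensity-independent generalization error bound (Theorem 1).**
Suppose `ℓ` is `L`-Lipschitz in each argument, `H` is a nonempty, uniformly bounded
class of real `m × n` matrices containing the true rating matrix `R`, `P_unif` is
the uniform (MCAR) distribution on `D` and `P_MNAR` is any probability distribution
on `D`.  If `S_MCAR` and `S_MNAR` are independent i.i.d. samples of size `M` from
`P_unif` and `P_MNAR` with empirical distributions `P̂_MCAR`, `P̂_MNAR`, then for
every `δ ∈ (0, 1)`, with probability at least `1 − δ`, for every `R̂ ∈ H`:
`L^ℓ_ideal(R̂) ≤ (1/M) Σ_k ℓ(R̂ (S_MNAR k), R (S_MNAR k))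
  + ψ_{R̂,H}(P̂_MCAR, P̂_MNAR)
  + 2L (3 R_{P_MNAR,M}(H) + 2 R_{P_unif,M}(H)) + 3Δ √(log(6/δ)/(2M))`. -/
theorem propensity_independent_generalization_bound
    (m n : ℕ) (hm : 1 ≤ m) (hn : 1 ≤ n)
    (Δ : ℝ) (hΔ : 0 < Δ)
    (ℓ : ℝ → ℝ → ℝ) (hℓ : ∀ a b : ℝ, ℓ a b ∈ Set.Icc (0 : ℝ) Δ)
    (L : ℝ) (hL : 0 < L)
    (hLip1 : ∀ a a' b : ℝ, |ℓ a b - ℓ a' b| ≤ L * |a - a'|)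
    (hLip2 : ∀ a b b' : ℝ, |ℓ a b - ℓ a b'| ≤ L * |b - b'|)
    (R : Fin m → Fin n → ℝ)
    (H : Set (Fin m → Fin n → ℝ)) (hH : H.Nonempty)
    (hHb : ∃ C : ℝ, ∀ Rh ∈ H, ∀ u : Fin m, ∀ i : Fin n, |Rh u i| ≤ C)
    (hR : R ∈ H)
    (Pmnar : Fin m × Fin n → ℝ) (hPm0 : ∀ p, 0 ≤ Pmnar p)
    (hPm1 : ∑ p : Fin m × Fin n, Pmnar p = 1)
    (M : ℕ) (hM : 1 ≤ M)
    (δ : ℝ) (hδ : δ ∈ Set.Ioo (0 : ℝ) 1) :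
    1 - δ ≤ prSample2 M (fun _ : Fin m × Fin n => 1 / (m * n : ℝ)) Pmnar
      (fun Smcar Smnar =>
        ∀ Rhat ∈ H,
          (1 / (m * n : ℝ)) *
              (∑ p : Fin m × Fin n, ℓ (Rhat p.1 p.2) (R p.1 p.2)) ≤
            (1 / (M : ℝ)) *
                (∑ k : Fin M,
                  ℓ (Rhat (Smnar k).1 (Smnar k).2) (R (Smnar k).1 (Smnar k).2)) +
              PMD ℓ H Rhat (empDist Smcar) (empDist Smnar) +
              2 * L * (3 * matRademacher M Pmnar H +
                2 * matRademacher M (fun _ : Fin m × Fin n => 1 / (m * n : ℝ)) H) +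
              3 * Δ * Real.sqrt (Real.log (6 / δ) / (2 * M))) := by
  obtain ⟨C, hC⟩ := hHb
  have hunif : ∀ _p : Fin m × Fin n, 0 ≤ 1 / (m * n : ℝ) := fun _ => by positivity
  have hunif1 : ∑ _p : Fin m × Fin n, 1 / (m * n : ℝ) = 1 := by
    have : m ≠ 0 := by omega
    have : n ≠ 0 := by omega
    simp only [Finset.sum_const, Finset.card_univ, Fintype.card_prod, Fintype.card_fin,
      nsmul_eq_mul, Nat.cast_mul]
    field_simp
  refine (propensity_independent_generalization_bound_general hΔ hℓ hL.le hLip1 hC hR hunif hunif1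
    hM hδ.1 hδ.2.le).trans
    (prSample_le_prSample2 hunif hPm0 hPm1 fun Smcar Smnar hbound Rhat hRhat => ?_)
  have hmain := hbound (empDist Smnar) Rhat hRhat
  rw [wLoss_empDist, wLoss, ← Finset.mul_sum] at hmain
  refine hmain.trans (add_le_add (add_le_add_right ?_ _) ?_)
  · have := matRademacher_nonneg (M := M) hPm0 hH hC
    have := matRademacher_nonneg (M := M) hunif hH hC
    exact mul_le_mul_of_nonneg_left (by linarith) (by positivity)
  · have hδ0 := hδ.1
    exact mul_le_mul (by linarith) (by gcongr; norm_num) (Real.sqrt_nonneg _) (by positivity)
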